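/- arXiv:2512.12329 — 2 statements merged into one kernel-verified Lean document; each statement's English description precedes it below -/
import Mathlib

section
/- For every finite graph G and weighting w of G, there exist either (a) an induced cycle C in G of length at least 4 and a vertex p ∈ V(G) \ V(C) such that N[V(C) ∪ {p}] is a w-balanced separator of G, or (b) two vertices p, q ∈ V(G) such that N[{p,q}] is a w-balanced separator of G. -/
open SimpleGraph

variable {V : Type}

/-- `u` and `v` are connected by a walk in `G` avoiding `S`
(i.e., they lie in the same component of `G - S`). -/
def ReachOutside (G : SimpleGraph V) (S : Set V) (u v : V) : Prop :=
  ∃ p : G.Walk u v, ∀ x ∈ p.support, x ∉ S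

/-- Total weight of a vertex set. -/
noncomputable def setWeight [Finite V] (w : V → ℝ) (A : Set V) : ℝ :=
  ∑ v ∈ (Set.toFinite A).toFinset, w v

/-- `S` is a `w`-balanced separator of `G`: every component of `G - S`
has weight at most half the total weight. -/
def IsBalancedSep [Finite V] (G : SimpleGraph V) (w : V → ℝ) (S : Set V) : Prop :=
  ∀ v, v ∉ S → setWeight w {u | ReachOutside G S u v} ≤ setWeight w (Set.univ : Set V) / 2

/-- Closed neighbourhood `N[A]` of a vertex set. -/
def closedNbhd (G : SimpleGraph V) (A : Set V) : Set V :=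
  A ∪ {x | ∃ a ∈ A, G.Adj a x}

/-- `S` separates `A` from `B` in `G`: every walk from `A` to `B` meets `S`. -/
def Separates (G : SimpleGraph V) (S A B : Set V) : Prop :=
  ∀ a ∈ A, ∀ b ∈ B, ∀ p : G.Walk a b, ∃ x ∈ p.support, x ∈ S

/-- `C` is (the vertex set of) an induced cycle of `G`: the induced subgraph is
connected and every vertex of `C` has exactly two neighbours in `C`. -/
def IsInducedCycle (G : SimpleGraph V) (C : Set V) : Prop :=
  (G.induce C).Connected ∧ ∀ x ∈ C, (G.neighborSet x ∩ C).ncard = 2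

/-- `H` is an induced minor of `G`. -/
def IsInducedMinor {W : Type} (H : SimpleGraph W) (G : SimpleGraph V) : Prop :=
  ∃ X : W → Set V,
    (∀ a, (G.induce (X a)).Connected) ∧
    (Pairwise fun a b => Disjoint (X a) (X b)) ∧
    ∀ a b, a ≠ b → ((∃ u ∈ X a, ∃ v ∈ X b, G.Adj u v) ↔ H.Adj a b)

/-- `H` is a minor of `G`. -/
def IsMinor {W : Type} (H : SimpleGraph W) (G : SimpleGraph V) : Prop :=
  ∃ X : W → Set V,
    (∀ a, (G.induce (X a)).Connected) ∧
    (Pairwise fun a b => Disjoint (X a) (X b)) ∧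
    ∀ a b, H.Adj a b → ∃ u ∈ X a, ∃ v ∈ X b, G.Adj u v

/-- The `ℓ`-wheel: a cycle of length `ℓ` plus a universal vertex (`none`). -/
def wheel (ℓ : ℕ) : SimpleGraph (Option (ZMod ℓ)) :=
  SimpleGraph.fromRel fun a b =>
    a = none ∨ b = none ∨ ∃ i : ZMod ℓ, a = some i ∧ b = some (i + 1)

/-- The `ℓ`-fan: a path on `ℓ` vertices plus a universal vertex (`none`). -/
def fan (ℓ : ℕ) : SimpleGraph (Option (Fin ℓ)) :=
  SimpleGraph.fromRel fun a b =>
    a = none ∨ b = none ∨ ∃ i j : Fin ℓ, a = some i ∧ b = some j ∧ (j : ℕ) = (i : ℕ) + 1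

lemma ro_symm {G : SimpleGraph V} {S : Set V} {u v : V} (h : ReachOutside G S u v) :
    ReachOutside G S v u := by
  obtain ⟨p, hp⟩ := h
  exact ⟨p.reverse, fun x hx => hp x (by simpa using hx)⟩

lemma ro_trans {G : SimpleGraph V} {S : Set V} {u v x : V} (h : ReachOutside G S u v)
    (h' : ReachOutside G S v x) : ReachOutside G S u x := by
  obtain ⟨p, hp⟩ := h
  obtain ⟨q, hq⟩ := h'
  refine ⟨p.append q, fun y hy => ?_⟩
  rw [Walk.mem_support_append_iff] at hy
  exact hy.elim (hp y) (hq y)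

lemma ro_refl {G : SimpleGraph V} {S : Set V} {u : V} (h : u ∉ S) : ReachOutside G S u u :=
  ⟨Walk.nil, fun x hx => by simp at hx; subst hx; exact h⟩

lemma ro_adj {G : SimpleGraph V} {S : Set V} {u v : V} (h : u ∉ S) (h' : v ∉ S)
    (ha : G.Adj u v) : ReachOutside G S u v :=
  ⟨Walk.cons ha Walk.nil, fun x hx => by
    simp at hx; rcases hx with rfl | rfl <;> assumption⟩

lemma ro_left {G : SimpleGraph V} {S : Set V} {u v : V} (h : ReachOutside G S u v) : u ∉ S := by
  obtain ⟨p, hp⟩ := h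
  exact hp _ p.start_mem_support

lemma ro_right {G : SimpleGraph V} {S : Set V} {u v : V} (h : ReachOutside G S u v) : v ∉ S :=
  ro_left (ro_symm h)

lemma ro_walk {G : SimpleGraph V} {S : Set V} {u v : V} (h : ReachOutside G S u v) :
    ∃ p : G.Walk u v, ∀ x ∈ p.support, ReachOutside G S x v := by
  classical
  obtain ⟨p, hp⟩ := h
  exact ⟨p, fun x hx => ⟨p.dropUntil x hx, fun y hy => hp y (p.support_dropUntil_subset_support hx hy)⟩⟩

lemma sw_mono [Finite V] {w : V → ℝ} (hw : ∀ v, 0 ≤ w v) {A B : Set V} (h : A ⊆ B) :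
    setWeight w A ≤ setWeight w B := by
  unfold setWeight
  apply Finset.sum_le_sum_of_subset_of_nonneg
  · simpa using h
  · intros; apply hw

lemma sw_meet [Finite V] {w : V → ℝ} (hw : ∀ v, 0 ≤ w v) {A B : Set V}
    (hA : setWeight w (Set.univ : Set V) / 2 < setWeight w A)
    (hB : setWeight w (Set.univ : Set V) / 2 < setWeight w B) : ∃ z, z ∈ A ∧ z ∈ B := by
  classical
  by_contra hc
  push Not at hc
  have h1 : setWeight w A + setWeight w B = setWeight w (A ∪ B) := by
    unfold setWeight
    rw [← Finset.sum_union]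
    · congr 1
      ext x; simp
    · rw [Finset.disjoint_left]
      intro x hx; simpa using hc x (by simpa using hx)
  have h2 := sw_mono hw (Set.subset_univ (A ∪ B))
  linarith

/-- a heavy component meets every balanced separator -/
lemma heavy_meets [Finite V] {G : SimpleGraph V} {w : V → ℝ} (hw : ∀ v, 0 ≤ w v) {S T : Set V}
    (hT : IsBalancedSep G w T) {a : V} (ha : a ∉ S)
    (hA : setWeight w (Set.univ : Set V) / 2 < setWeight w {u | ReachOutside G S u a}) :
    ∃ x, ReachOutside G S x a ∧ x ∈ T := by
  by_contra hc
  push Not at hc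
  have h1 := hT a (hc a (ro_refl ha))
  have h2 : setWeight w {u | ReachOutside G S u a} ≤ setWeight w {u | ReachOutside G T u a} := by
    apply sw_mono hw
    intro u hu
    obtain ⟨p, hp⟩ := ro_walk hu
    exact ⟨p, fun x hx => hc x (hp x hx)⟩
  linarith

lemma bal_mono [Finite V] {G : SimpleGraph V} {w : V → ℝ} (hw : ∀ v, 0 ≤ w v) {S T : Set V}
    (hS : IsBalancedSep G w S) (h : S ⊆ T) : IsBalancedSep G w T := by
  intro v hv
  refine le_trans (sw_mono hw ?_) (hS v (fun hh => hv (h hh)))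
  rintro u ⟨p, hp⟩
  exact ⟨p, fun x hx hh => hp x hx (h hh)⟩

lemma not_bal [Finite V] {G : SimpleGraph V} {w : V → ℝ} {S : Set V}
    (hS : ¬ IsBalancedSep G w S) : ∃ a, a ∉ S ∧
      setWeight w (Set.univ : Set V) / 2 < setWeight w {u | ReachOutside G S u a} := by
  unfold IsBalancedSep at hS
  push Not at hS
  exact hS

/-- `v 0, …, v (k-1)` is an induced path -/
def IP (G : SimpleGraph V) (v : ℕ → V) (k : ℕ) : Prop :=
  ∀ i j, i < j → j < k → v i ≠ v j ∧ (G.Adj (v i) (v j) ↔ j = i + 1)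

/-- closed neighbourhood of `v 0, …, v (k-1)` -/
def PN (G : SimpleGraph V) (v : ℕ → V) (k : ℕ) : Set V :=
  {x | ∃ i < k, x = v i ∨ G.Adj (v i) x}

lemma gy_path [Finite V] [Nonempty V] (G : SimpleGraph V)
    (w : V → ℝ) (hw : ∀ v, 0 ≤ w v) :
    ∃ k v, IP G v k ∧ IsBalancedSep G w (PN G v k) := by
  by_contra hc
  push Not at hc
  have key : ∀ k, ∃ v, IP G v (k+1) ∧ ∃ b, b ∉ PN G v k ∧
      setWeight w (Set.univ : Set V) / 2 < setWeight w {u | ReachOutside G (PN G v k) u b} ∧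
      ∃ x, ReachOutside G (PN G v k) x b ∧ (x = v k ∨ G.Adj (v k) x) := by
    intro k
    induction k with
    | zero =>
      obtain ⟨v0⟩ := ‹Nonempty V›
      obtain ⟨b, hb, hB⟩ := not_bal (hc 0 (fun _ => v0) (by intro i j h h'; omega))
      have hPN : ∀ v : ℕ → V, PN G v 0 = ∅ := by intro v; ext x; simp [PN]
      refine ⟨fun _ => b, by intro i j h h'; omega, b, by simp [hPN], ?_, b, ?_, Or.inl rfl⟩
      · rw [hPN] at hB ⊢; exact hB
      · rw [hPN]; exact ro_refl (by simp)
    | succ k ih =>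
      obtain ⟨v, hv, b, hb, hB, x, hxb, hx⟩ := ih
      obtain ⟨b', hb', hB'⟩ := not_bal (hc (k+1) v hv)
      obtain ⟨z, hz, hz'⟩ := sw_meet hw hB hB'
      have hxP : x ∈ PN G v (k+1) := ⟨k, by omega, hx⟩
      obtain ⟨p, hp⟩ := ro_trans hz (ro_symm hxb)
      obtain ⟨d, hd, hd1, hd2⟩ := p.exists_boundary_dart {u | ReachOutside G (PN G v (k+1)) u b'} hz'
        (fun h => ro_left h hxP)
      have hs : ReachOutside G (PN G v (k+1)) d.fst b' := hd1
      have ht : d.snd ∉ PN G v k := hp _ (p.dart_snd_mem_support_of_mem_darts hd)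
      have hst : G.Adj d.fst d.snd := d.adj
      generalize d.fst = s at *
      generalize d.snd = t at *
      have ht' : t ∈ PN G v (k+1) := by
        by_contra h
        exact hd2 (ro_trans (ro_adj h (ro_left hs) hst.symm) hs)
      have hkt : G.Adj (v k) t := by
        obtain ⟨i, hi, h⟩ := ht'
        rcases Nat.lt_succ_iff_lt_or_eq.1 hi with h1 | rfl
        · exact absurd ⟨i, h1, h⟩ ht
        · rcases h with rfl | h
          · exact absurd ⟨i, hi, Or.inr hst.symm⟩ (ro_left hs)
          · exact h
      have hlt : ∀ i, i < k + 1 → Function.update v (k+1) t i = v i := by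
        intro i hi; rw [Function.update_of_ne (by omega)]
      have hPN : PN G (Function.update v (k+1) t) (k+1) = PN G v (k+1) := by
        ext y
        constructor
        · rintro ⟨i, hi, h⟩
          rw [hlt i hi] at h; exact ⟨i, hi, h⟩
        · rintro ⟨i, hi, h⟩
          rw [← hlt i hi] at h; exact ⟨i, hi, h⟩
      refine ⟨Function.update v (k+1) t, ?_, b', ?_, ?_, s, ?_, ?_⟩
      · intro i j hij hj
        rw [hlt i (by omega)]
        rcases Nat.lt_succ_iff_lt_or_eq.1 hj with h1 | rfl
        · rw [hlt j h1]; exact hv i j hij h1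
        · rw [Function.update_self]
          rcases Nat.lt_succ_iff_lt_or_eq.1 hij with h1 | rfl
          · refine ⟨fun h => ht ⟨i, h1, Or.inl h.symm⟩, fun h => (ht ⟨i, h1, Or.inr h⟩).elim, ?_⟩
            intro h; omega
          · exact ⟨hkt.ne, fun _ => rfl, fun _ => hkt⟩
      · rw [hPN]; exact hb'
      · rw [hPN]; exact hB'
      · rw [hPN]; exact hs
      · rw [Function.update_self]; exact Or.inr hst.symm
  obtain ⟨v, hv, -⟩ := key (Nat.card V)
  have hinj : Function.Injective (fun i : Fin (Nat.card V + 1) => v i) := by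
    intro i j hij
    by_contra hne
    rcases lt_or_gt_of_ne hne with h | h
    · exact (hv i j h j.2).1 hij
    · exact (hv j i h i.2).1 hij.symm
  have := Nat.card_le_card_of_injective _ hinj
  simp at this

/-- connecting sequence -/
def Conn (G : SimpleGraph V) (D : Set V) (a b : V) (l : ℕ) (q : ℕ → V) : Prop :=
  (∀ i ≤ l, q i ∈ D) ∧ (∀ i < l, G.Adj (q i) (q (i+1))) ∧ G.Adj a (q 0) ∧ G.Adj (q l) b

lemma conn_path {G : SimpleGraph V} {D : Set V} {a b x y : V} (p : G.Walk x y)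
    (hp : ∀ z ∈ p.support, z ∈ D) (hx : G.Adj a x) (hy : G.Adj y b) :
    ∃ l q, (∀ i ≤ l, q i ∈ D) ∧ IP G q (l+1) ∧ (∀ i ≤ l, G.Adj a (q i) ↔ i = 0) ∧
      (∀ i ≤ l, G.Adj (q i) b ↔ i = l) := by
  classical
  have hex : ∃ l, ∃ q, Conn G D a b l q :=
    ⟨p.length, p.getVert, fun i _ => hp _ (p.getVert_mem_support i),
      fun i hi => p.adj_getVert_succ hi, by simpa using hx, by simpa using hy⟩
  obtain ⟨q, hD, hq, hqa, hqb⟩ := Nat.find_spec hex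
  have hmin := fun m => Nat.find_min hex (m := m)
  set l := Nat.find hex
  -- shortcut lemma
  have hcut : ∀ i j, i + 1 < j → j ≤ l → ¬ G.Adj (q i) (q j) := by
    intro i j hij hj hadj
    refine hmin (l - (j - i - 1)) (by omega)
      ⟨fun t => if t ≤ i then q t else q (t + (j - i - 1)), ?_, ?_, ?_, ?_⟩
    · intro t ht
      dsimp only
      split_ifs
      · exact hD _ (by omega)
      · exact hD _ (by omega)
    · intro t ht
      dsimp only
      rcases lt_trichotomy t i with h | h | h
      · rw [if_pos (by omega), if_pos (by omega)]; exact hq _ (by omega)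
      · subst h
        rw [if_pos le_rfl, if_neg (by omega), show t + 1 + (j - t - 1) = j by omega]; exact hadj
      · rw [if_neg (by omega), if_neg (by omega), show t + 1 + (j - i - 1) = t + (j - i - 1) + 1 by omega]
        exact hq _ (by omega)
    · simpa using hqa
    · dsimp only
      rw [if_neg (by omega), show l - (j - i - 1) + (j - i - 1) = l by omega]; exact hqb
  have ha : ∀ i ≤ l, G.Adj a (q i) → i = 0 := by
    intro i hi h
    by_contra h0
    refine hmin (l - i) (by omega) ⟨fun t => q (t + i), ?_, ?_, ?_, ?_⟩
    · intro t ht; exact hD _ (by omega)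
    · intro t ht
      dsimp only
      rw [show t + 1 + i = t + i + 1 by omega]; exact hq _ (by omega)
    · simpa using h
    · dsimp only
      rw [show l - i + i = l by omega]; exact hqb
  have hb : ∀ i ≤ l, G.Adj (q i) b → i = l := by
    intro i hi h
    by_contra h0
    exact hmin i (by omega) ⟨q, fun t ht => hD _ (by omega), fun t ht => hq _ (by omega), hqa, h⟩
  refine ⟨l, q, hD, ?_, fun i hi => ⟨ha i hi, ?_⟩, fun i hi => ⟨hb i hi, ?_⟩⟩
  · intro i j hij hj
    refine ⟨fun h => ?_, fun h => ?_, ?_⟩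
    · rcases Nat.eq_or_lt_of_le (show j ≤ l by omega) with h1 | h1
      · have := hb i (by omega) (by rw [h, h1]; exact hqb)
        omega
      · exact hcut i (j+1) (by omega) (by omega) (h ▸ hq j h1)
    · by_contra h1
      exact hcut i j (by omega) (by omega) h
    · rintro rfl; exact hq _ (by omega)
  · rintro rfl; exact hqa
  · rintro rfl; exact hqb

lemma cyc {G : SimpleGraph V} (c : ℕ → V) (n : ℕ) (hn : 4 ≤ n)
    (hc : ∀ i j, i < j → j < n → c i ≠ c j ∧ (G.Adj (c i) (c j) ↔ (j = i + 1 ∨ (i = 0 ∧ j + 1 = n)))) :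
    IsInducedCycle G (c '' {i | i < n}) ∧ (c '' {i | i < n}).ncard = n := by
  have hinj : Set.InjOn c {i | i < n} := by
    intro i hi j hj hij
    by_contra hne
    rcases lt_or_gt_of_ne hne with h | h
    · exact (hc i j h hj).1 hij
    · exact (hc j i h hi).1 hij.symm
  have hadj : ∀ i j, i < n → j < n → (G.Adj (c i) (c j) ↔
      (j = i + 1 ∨ i = j + 1 ∨ (i = 0 ∧ j + 1 = n) ∨ (j = 0 ∧ i + 1 = n))) := by
    intro i j hi hj
    rcases lt_trichotomy i j with h | h | h
    · rw [(hc i j h hj).2]; omega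
    · subst h; simp; omega
    · rw [G.adj_comm, (hc j i h hi).2]; omega
  refine ⟨⟨?_, ?_⟩, ?_⟩
  · have h0 : c 0 ∈ c '' {i | i < n} := ⟨0, by simp; omega, rfl⟩
    have hr : ∀ i (hi : i < n), (G.induce (c '' {i | i < n})).Reachable ⟨c 0, h0⟩ ⟨c i, ⟨i, hi, rfl⟩⟩ := by
      intro i
      induction i with
      | zero => intro hi; exact Reachable.refl _
      | succ i ih =>
        intro hi
        refine (ih (by omega)).trans (Adj.reachable ?_)
        simp only [comap_adj, Function.Embedding.subtype_apply]
        exact (hadj i (i+1) (by omega) hi).2 (Or.inl rfl)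
    have : Nonempty (c '' {i | i < n}) := ⟨⟨c 0, h0⟩⟩
    refine Connected.mk ?_
    rintro ⟨_, i, hi, rfl⟩ ⟨_, j, hj, rfl⟩
    exact (hr i hi).symm.trans (hr j hj)
  · rintro _ ⟨i, hi, rfl⟩
    have hi : i < n := hi
    obtain ⟨s, t, hs, ht, hst, h⟩ : ∃ s t, s < n ∧ t < n ∧ s ≠ t ∧ ∀ j, j < n →
        ((j = i + 1 ∨ i = j + 1 ∨ (i = 0 ∧ j + 1 = n) ∨ (j = 0 ∧ i + 1 = n)) ↔ (j = s ∨ j = t)) := by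
      by_cases h0 : i = 0
      · exact ⟨1, n-1, by omega, by omega, by omega, by omega⟩
      · by_cases h1 : i + 1 = n
        · exact ⟨0, i-1, by omega, by omega, by omega, by omega⟩
        · exact ⟨i+1, i-1, by omega, by omega, by omega, by omega⟩
    rw [Set.ncard_eq_two]
    refine ⟨c s, c t, fun he => hst (hinj hs ht he), ?_⟩
    ext y
    constructor
    · rintro ⟨hy, j, hj, rfl⟩
      rcases (h j hj).1 ((hadj i j hi hj).1 hy) with rfl | rfl <;> simp
    · rintro (rfl | rfl)
      · exact ⟨(hadj _ _ hi hs).2 ((h _ hs).2 (Or.inl rfl)), s, hs, rfl⟩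
      · exact ⟨(hadj _ _ hi ht).2 ((h _ ht).2 (Or.inr rfl)), t, ht, rfl⟩
  · rw [hinj.ncard_image]
    have : ({i | i < n} : Set ℕ) = ((Finset.range n : Finset ℕ) : Set ℕ) := by ext; simp
    rw [this, Set.ncard_coe_finset, Finset.card_range]

/-- Gyárfás cycle-plus-vertex. -/
theorem gyarfas_cycle_plus_vertex [Finite V] [Nonempty V] (G : SimpleGraph V)
    (w : V → ℝ) (hw0 : ∀ v, 0 ≤ w v) :
    (∃ C : Set V, IsInducedCycle G C ∧ 4 ≤ C.ncard ∧
      ∃ p, p ∉ C ∧ IsBalancedSep G w (closedNbhd G (C ∪ {p}))) ∨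
    (∃ p q : V, IsBalancedSep G w (closedNbhd G {p, q})) := by
  classical
  have hex := gy_path G w hw0
  obtain ⟨v, hv, hbal⟩ := Nat.find_spec hex
  have hmin := fun m => Nat.find_min hex (m := m)
  generalize Nat.find hex = m at *
  by_cases hm : m < 3
  · right
    refine ⟨v 0, v 1, bal_mono hw0 hbal ?_⟩
    rintro x ⟨i, hi, h⟩
    have : i < 2 ∨ i = 2 := by omega
    have hi2 : i = 0 ∨ i = 1 := by omega
    rcases hi2 with rfl | rfl
    · rcases h with rfl | h
      · left; simp
      · right; exact ⟨v 0, by simp, h⟩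
    · rcases h with rfl | h
      · left; simp
      · right; exact ⟨v 1, by simp, h⟩
  obtain ⟨k, rfl⟩ : ∃ k, m = k + 3 := ⟨m - 3, by omega⟩
  clear hm
  -- drop the last vertex
  obtain ⟨a, haS, hA⟩ := not_bal (G := G) (w := w) (S := PN G v (k+2))
    (fun h => hmin (k+2) (by omega) ⟨v, fun i j hij hj => hv i j hij (by omega), h⟩)
  -- drop the first vertex
  obtain ⟨b, hbS, hB⟩ := not_bal (G := G) (w := w) (S := PN G (fun i => v (i+1)) (k+2))
    (fun h => hmin (k+2) (by omega) ⟨fun i => v (i+1), fun i j hij hj => by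
      have := hv (i+1) (j+1) (by omega) (by omega)
      simpa using this, h⟩)
  set SA := PN G v (k+2) with hSA
  set SB := PN G (fun i => v (i+1)) (k+2) with hSB
  have hAn : ∀ u, u ∉ SA → ∀ i < k + 2, u ≠ v i ∧ ¬ G.Adj (v i) u := by
    intro u hu i hi
    exact ⟨fun h => hu ⟨i, hi, Or.inl h⟩, fun h => hu ⟨i, hi, Or.inr h⟩⟩
  have hBn : ∀ u, u ∉ SB → ∀ i < k + 2, u ≠ v (i+1) ∧ ¬ G.Adj (v (i+1)) u := by
    intro u hu i hi
    exact ⟨fun h => hu ⟨i, hi, Or.inl h⟩, fun h => hu ⟨i, hi, Or.inr h⟩⟩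
  have hstep : ∀ i, i < k + 2 → G.Adj (v i) (v (i+1)) := fun i hi =>
    (hv i (i+1) (by omega) (by omega)).2.2 rfl
  have hAP : ∀ u, u ∉ SA → ∀ i < k + 3, u ≠ v i := by
    intro u hu i hi h
    rcases Nat.lt_succ_iff_lt_or_eq.1 hi with h1 | rfl
    · exact (hAn u hu i h1).1 h
    · exact (hAn u hu (k+1) (by omega)).2 (h ▸ hstep (k+1) (by omega))
  have hBP : ∀ u, u ∉ SB → ∀ i < k + 3, u ≠ v i := by
    intro u hu i hi h
    rcases i with _ | i
    · exact (hBn u hu 0 (by omega)).2 (h ▸ (hstep 0 (by omega)).symm)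
    · exact (hBn u hu i (by omega)).1 h
  obtain ⟨x, hxA, i, hi, hx⟩ := heavy_meets hw0 hbal haS hA
  have hx : G.Adj (v (k+2)) x := by
    rcases hx with hx | hx
    · exact absurd hx (hAP x (ro_left hxA) i hi)
    · rcases Nat.lt_succ_iff_lt_or_eq.1 hi with h1 | rfl
      · exact absurd hx (hAn x (ro_left hxA) i h1).2
      · exact hx
  obtain ⟨y, hyB, i, hi, hy⟩ := heavy_meets hw0 hbal hbS hB
  have hy : G.Adj (v 0) y := by
    rcases hy with hy | hy
    · exact absurd hy (hBP y (ro_left hyB) i hi)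
    · rcases i with _ | i
      · exact hy
      · exact absurd hy (hBn y (ro_left hyB) i (by omega)).2
  obtain ⟨z, hzA, hzB⟩ := sw_meet hw0 hA hB
  obtain ⟨p1, hp1⟩ := ro_trans hxA (ro_symm hzA)
  obtain ⟨p2, hp2⟩ := ro_trans hzB (ro_symm hyB)
  obtain ⟨l, q, hD, hq, hqa, hqb⟩ := conn_path (D := {u | u ∉ SA ∨ u ∉ SB}) (p1.append p2)
    (by
      intro u hu
      rw [Walk.mem_support_append_iff] at hu
      exact hu.imp (hp1 u) (hp2 u)) hx hy.symm
  have hDP : ∀ j ≤ l, ∀ i < k + 3, q j ≠ v i := by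
    intro j hj i hi
    exact (hD j hj).elim (fun h => hAP _ h i hi) (fun h => hBP _ h i hi)
  have hDN : ∀ j ≤ l, ∀ i, 0 < i → i < k + 2 → ¬ G.Adj (v i) (q j) := by
    intro j hj i h0 hi
    obtain ⟨i, rfl⟩ : ∃ i', i = i' + 1 := ⟨i - 1, by omega⟩
    exact (hD j hj).elim (fun h => (hAn _ h _ hi).2) (fun h => (hBn _ h i (by omega)).2)
  let c : ℕ → V := fun i => if i < k + 3 then v i else q (i - (k+3))
  have hc1 : ∀ i, i < k + 3 → c i = v i := fun i hi => if_pos hi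
  have hc2 : ∀ i, c (i + (k + 3)) = q i := fun i => by
    simp only [c]; rw [if_neg (by omega)]; congr 1; omega
  obtain ⟨hC, hCc⟩ := cyc (G := G) c (k + 3 + (l + 1)) (by omega) (by
    intro i j hij hj
    by_cases hj3 : j < k + 3
    · rw [hc1 i (by omega), hc1 j hj3, (hv i j hij hj3).2]
      exact ⟨(hv i j hij hj3).1, by omega⟩
    · obtain ⟨j, rfl⟩ : ∃ j', j = j' + (k + 3) := ⟨j - (k+3), by omega⟩
      rw [hc2]
      by_cases hi3 : i < k + 3
      · rw [hc1 i hi3]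
        refine ⟨(hDP j (by omega) i hi3).symm, ?_⟩
        rcases Nat.eq_zero_or_pos i with rfl | h0
        · rw [G.adj_comm, hqb j (by omega)]; omega
        · rcases Nat.lt_succ_iff_lt_or_eq.1 hi3 with h1 | rfl
          · constructor
            · intro h; exact absurd h (hDN j (by omega) i h0 h1)
            · omega
          · rw [hqa j (by omega)]; omega
      · obtain ⟨i, rfl⟩ : ∃ i', i = i' + (k + 3) := ⟨i - (k+3), by omega⟩
        rw [hc2, (hq i j (by omega) (by omega)).2]
        exact ⟨(hq i j (by omega) (by omega)).1, by omega⟩)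
  by_cases hp : ∃ p, p ∉ c '' {i | i < k + 3 + (l + 1)}
  · left
    obtain ⟨p, hp⟩ := hp
    refine ⟨_, hC, by omega, p, hp, bal_mono hw0 hbal ?_⟩
    rintro u ⟨i, hi, h⟩
    have hmem : v i ∈ c '' {i | i < k + 3 + (l + 1)} := ⟨i, by simp; omega, hc1 i hi⟩
    rcases h with rfl | h
    · exact Or.inl (Or.inl hmem)
    · exact Or.inr ⟨v i, Or.inl hmem, h⟩
  · right
    push Not at hp
    have hall : ∀ u, (∃ i < k + 3, u = v i) ∨ (∃ j ≤ l, u = q j) := by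
      intro u
      obtain ⟨i, hi, rfl⟩ := hp u
      have hi : i < k + 3 + (l + 1) := hi
      by_cases h : i < k + 3
      · exact Or.inl ⟨i, h, hc1 i h⟩
      · exact Or.inr ⟨i - (k+3), by omega, if_neg h⟩
    refine ⟨v 0, v (k+2), ?_⟩
    by_contra hnb
    obtain ⟨r, hr, hR⟩ := not_bal hnb
    set T := closedNbhd G {v 0, v (k+2)} with hT
    have hT0 : v 0 ∈ T := Or.inl (by simp)
    have hT2 : v (k+2) ∈ T := Or.inl (by simp)
    have hTa : ∀ u, G.Adj (v 0) u → u ∈ T := fun u h => Or.inr ⟨v 0, by simp, h⟩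
    have hTb : ∀ u, G.Adj (v (k+2)) u → u ∈ T := fun u h => Or.inr ⟨v (k+2), by simp, h⟩
    let I : Set V := {u | ∃ i, 0 < i ∧ i < k + 2 ∧ u = v i}
    have hPI : ∀ u, u ∉ T → ∀ i < k + 3, u = v i → u ∈ I := by
      rintro u hu i hi rfl
      refine ⟨i, ?_, ?_, rfl⟩
      · rcases Nat.eq_zero_or_pos i with rfl | h
        · exact absurd hT0 hu
        · exact h
      · rcases Nat.lt_succ_iff_lt_or_eq.1 hi with h | rfl
        · exact h
        · exact absurd hT2 hu
    -- a vertex of the component near the path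
    obtain ⟨u, hu, i, hi, hui⟩ := heavy_meets hw0 hbal hr hR
    have huT := ro_left hu
    have huI : u ∈ I := by
      rcases hall u with ⟨i', hi', h'⟩ | ⟨j, hj, h'⟩
      · exact hPI u huT i' hi' h'
      · rcases hui with hui | hui
        · exact hPI u huT i hi hui
        · exfalso
          rcases Nat.eq_zero_or_pos i with rfl | h0
          · exact huT (hTa u hui)
          · rcases Nat.lt_succ_iff_lt_or_eq.1 hi with h | rfl
            · exact hDN j hj i h0 h (h' ▸ hui)
            · exact huT (hTb u hui)
    obtain ⟨s, hs, hsA⟩ := sw_meet hw0 hR hA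
    have hsI : s ∉ I := by
      rintro ⟨i, _, h, h'⟩
      exact hAP s (ro_left hsA) i (by omega) h'
    obtain ⟨p, hpp⟩ := ro_trans hu (ro_symm hs)
    obtain ⟨d, hd, hd1, hd2⟩ := p.exists_boundary_dart I huI hsI
    have hdT : d.snd ∉ T := hpp _ (p.dart_snd_mem_support_of_mem_darts hd)
    have hdA : G.Adj d.fst d.snd := d.adj
    obtain ⟨i, h0, hi, hdi⟩ := hd1
    rcases hall d.snd with ⟨i', hi', h'⟩ | ⟨j, hj, h'⟩
    · exact hd2 (hPI _ hdT i' hi' h')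
    · rw [hdi, h'] at hdA
      exact hDN j hj i h0 hi hdA
end

section
/- Let G be a cobweb with presentation (C, I) and σ a wedge-selection for (G, C, I). If {u, v} ⊆ I is a good pair (with respect to σ), then each connected component P of σ(u) ∩ σ(v) ∩ C is separated from C - V(P) in G by ∂σ(u) ∪ ∂σ(v), the union of the barriers of σ(u) and σ(v). -/
open SimpleGraph

variable {V : Type}

/-- `G` is a cobweb with presentation `(C, I)`. -/
def IsCobweb (G : SimpleGraph V) (C I : Set V) : Prop :=
  IsInducedCycle G C ∧ I = Cᶜ ∧ I.Nonempty ∧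
  (∀ u ∈ I, ∀ v ∈ I, ¬ G.Adj u v) ∧
  (∀ v : V, 2 ≤ (G.neighborSet v).ncard) ∧
  ∀ u ∈ I, ∀ v ∈ I, u ≠ v → ¬ G.neighborSet u ⊆ G.neighborSet v

/-- A subgraph is a cycle: its coercion is connected and 2-regular. -/
def IsCycleSubgraph (G : SimpleGraph V) (W : G.Subgraph) : Prop :=
  W.coe.Connected ∧ ∀ x ∈ W.verts, (W.neighborSet x).ncard = 2

/-- `W` is a wedge of `(G, C, I)` anchored in `v`: a cycle containing exactly one
vertex of `I`, namely `v`, and exactly two neighbours of `v`. -/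
def IsWedge (G : SimpleGraph V) (C I : Set V) (W : G.Subgraph) (v : V) : Prop :=
  IsCycleSubgraph G W ∧ v ∈ I ∧ W.verts ∩ I = {v} ∧
  (W.verts ∩ G.neighborSet v).ncard = 2

/-- `u` attaches to the wedge `W`. -/
def Attaches (G : SimpleGraph V) (u : V) (W : G.Subgraph) : Prop :=
  u ∉ W.verts ∧ G.neighborSet u ⊆ W.verts

/-- The union of components of `G - V(W)` containing vertices of `C`
(for a non-co-trivial wedge this is the unique such component). -/
def outerPart (G : SimpleGraph V) (C : Set V) (W : G.Subgraph) : Set V :=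
  {d | d ∉ W.verts ∧ ∃ c ∈ C, c ∉ W.verts ∧ ReachOutside G W.verts d c}

open Classical in
/-- The barrier `∂W` of a wedge `W` anchored in `v`. -/
noncomputable def barrier (G : SimpleGraph V) (C : Set V) (W : G.Subgraph) (v : V) : Set V :=
  if C ⊆ W.verts then G.neighborSet v
  else {x | x ∉ outerPart G C W ∧ ∃ d ∈ outerPart G C W, G.Adj d x}

/-- `W₁` (a wedge anchored in `u`) improves `W₂` (a wedge anchored in `v`):
`W₁ - u` is a proper subgraph of `W₂ - v`. -/
def Improves (G : SimpleGraph V) (W₁ : G.Subgraph) (u : V) (W₂ : G.Subgraph) (v : V) : Prop :=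
  W₁.deleteVerts {u} ≤ W₂.deleteVerts {v} ∧ W₁.deleteVerts {u} ≠ W₂.deleteVerts {v}

/-- A vertex is good w.r.t. a wedge-selection `σ` if it is minimal in the
improvement order. -/
def GoodVertex (G : SimpleGraph V) (I : Set V) (σ : V → G.Subgraph) (u : V) : Prop :=
  u ∈ I ∧ ∀ x ∈ I, ¬ Improves G (σ x) x (σ u) u


/-- Local structure of a wedge at a vertex of the cycle. -/
theorem wedge_local [Finite V] {G : SimpleGraph V} {C I : Set V} (hC : IsInducedCycle G C)
    (hI : I = Cᶜ) {W : G.Subgraph} {u : V} (hW : IsWedge G C I W u) {y : V} (hy : y ∈ C) :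
    ∃ s t, s ≠ t ∧ (∀ z, (G.Adj y z ∧ z ∈ C) ↔ (z = s ∨ z = t)) ∧
      ((y ∉ W.verts ∧ ¬ W.Adj y s ∧ ¬ W.Adj y t) ∨
       (W.Adj u y ∧ W.Adj y s ∧ ¬ W.Adj y t) ∨
       (y ∈ W.verts ∧ ¬ W.Adj u y ∧ W.Adj y s ∧ W.Adj y t)) := by
  obtain ⟨s, t, hst, hN⟩ := Set.ncard_eq_two.1 (hC.2 y hy)
  have hN' : ∀ z, (G.Adj y z ∧ z ∈ C) ↔ (z = s ∨ z = t) := by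
    intro z
    have := Set.ext_iff.1 hN z
    simpa using this
  by_cases hyW : y ∈ W.verts
  · obtain ⟨m, n, hmn, hM⟩ := Set.ncard_eq_two.1 (hW.1.2 y hyW)
    have hM' : ∀ z, W.Adj y z ↔ (z = m ∨ z = n) := by
      intro z
      have := Set.ext_iff.1 hM z
      simpa using this
    have hcase : ∀ z, W.Adj y z → z = u ∨ z = s ∨ z = t := by
      intro z hz
      by_cases hzC : z ∈ C
      · exact Or.inr ((hN' z).1 ⟨hz.adj_sub, hzC⟩)
      · left
        have h1 : z ∈ W.verts ∩ I := ⟨hz.snd_mem, by rw [hI]; exact hzC⟩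
        rw [hW.2.2.1] at h1
        exact h1
    have hus : u ≠ s ∧ u ≠ t := by
      have huC : u ∉ C := by
        have := hW.2.1
        rw [hI] at this
        exact this
      constructor
      · rintro rfl; exact huC ((hN' u).2 (Or.inl rfl)).2
      · rintro rfl; exact huC ((hN' u).2 (Or.inr rfl)).2
    have hm := hcase m ((hM' m).2 (Or.inl rfl))
    have hn := hcase n ((hM' n).2 (Or.inr rfl))
    have e1 : W.Adj u y ↔ (u = m ∨ u = n) := by rw [W.adj_comm, hM']
    by_cases hs : W.Adj y s
    · refine ⟨s, t, hst, hN', Or.inr ?_⟩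
      rw [e1, hM' s, hM' t]
      rw [hM' s] at hs
      grind
    · refine ⟨t, s, hst.symm, fun z => (hN' z).trans or_comm, Or.inr ?_⟩
      rw [e1, hM' s, hM' t]
      rw [hM' s] at hs
      grind
  · exact ⟨s, t, hst, hN', Or.inl ⟨hyW, fun h => hyW h.fst_mem, fun h => hyW h.fst_mem⟩⟩

/-- The anchor of a wedge has exactly two neighbours in it, both on the cycle. -/
theorem wedge_anchor [Finite V] {G : SimpleGraph V} {C I : Set V}
    (hI : I = Cᶜ) (hind : ∀ u ∈ I, ∀ v ∈ I, ¬ G.Adj u v)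
    {W : G.Subgraph} {u : V} (hW : IsWedge G C I W u) :
    (∃ p q, p ≠ q ∧ p ∈ C ∧ q ∈ C ∧ ∀ z, W.Adj u z ↔ (z = p ∨ z = q)) ∧
    ∀ z ∈ W.verts, G.Adj u z → W.Adj u z := by
  have huW : u ∈ W.verts := by
    have : u ∈ W.verts ∩ I := by rw [hW.2.2.1]; rfl
    exact this.1
  have hd := hW.1.2 u huW
  refine ⟨?_, ?_⟩
  · obtain ⟨p, q, hpq, hN⟩ := Set.ncard_eq_two.1 hd
    have hN' : ∀ z, W.Adj u z ↔ (z = p ∨ z = q) := by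
      intro z
      have := Set.ext_iff.1 hN z
      simpa using this
    have hc : ∀ z, W.Adj u z → z ∈ C := by
      intro z hz
      by_contra hzC
      exact hind u hW.2.1 z (by rw [hI]; exact hzC) hz.adj_sub
    exact ⟨p, q, hpq, hc p ((hN' p).2 (Or.inl rfl)), hc q ((hN' q).2 (Or.inr rfl)), hN'⟩
  · intro z hz huz
    have hsub : W.neighborSet u ⊆ W.verts ∩ G.neighborSet u := fun a ha =>
      ⟨W.edge_vert (W.adj_symm ha), W.adj_sub ha⟩
    have heq := Set.eq_of_subset_of_ncard_le hsub (by rw [hd, hW.2.2.2]) (Set.toFinite _)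
    have : z ∈ W.neighborSet u := by rw [heq]; exact ⟨hz, huz⟩
    exact this

/-- The graph of the cycle edges not in the wedge. -/
def coGraph (G : SimpleGraph V) (C : Set V) (W : G.Subgraph) : SimpleGraph V where
  Adj a b := a ∈ C ∧ b ∈ C ∧ G.Adj a b ∧ ¬ W.Adj a b
  symm := ⟨fun a b h => ⟨h.2.1, h.1, h.2.2.1.symm, fun h' => h.2.2.2 h'.symm⟩⟩
  loopless := ⟨fun _ h => h.2.2.1.ne rfl⟩

/-- The part of a graph reachable from a vertex. -/
def reachGraph (R : SimpleGraph V) (p : V) : SimpleGraph V where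
  Adj a b := R.Adj a b ∧ R.Reachable p a
  symm := ⟨fun _ _ h => ⟨h.1.symm, h.2.trans h.1.reachable⟩⟩
  loopless := ⟨fun _ h => h.1.ne rfl⟩

/-- The two ends of a wedge are joined by cycle edges outside it. -/
theorem coGraph_ends [Finite V] {G : SimpleGraph V} {C I : Set V} (hC : IsInducedCycle G C)
    (hI : I = Cᶜ) {W : G.Subgraph} {u : V} (hW : IsWedge G C I W u) {p q : V}
    (hp : p ∈ C) (hpq : ∀ z, W.Adj u z ↔ (z = p ∨ z = q)) :
    (coGraph G C W).Reachable p q := by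
  classical
  haveI := Fintype.ofFinite V
  set R := coGraph G C W with hR
  have hdeg : ∀ y (S : Finset V), (∀ z, (reachGraph R p).Adj y z ↔ z ∈ S) →
      (reachGraph R p).degree y = S.card := by
    intro y S h
    rw [← SimpleGraph.card_neighborFinset_eq_degree]
    congr 1
    ext z
    simp [h]
  have hodd : Odd ((reachGraph R p).degree p) := by
    obtain ⟨s, t, hst, hN, h⟩ := wedge_local hC hI hW hp
    have hup : W.Adj u p := (hpq p).2 (Or.inl rfl)
    rw [hdeg p {t}]
    · simp
    · intro z
      have hz := hN z
      have : (reachGraph R p).Adj p z ↔ ((G.Adj p z ∧ z ∈ C) ∧ ¬ W.Adj p z) := by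
        constructor
        · rintro ⟨⟨_, h2, h3, h4⟩, _⟩; exact ⟨⟨h3, h2⟩, h4⟩
        · rintro ⟨⟨h3, h2⟩, h4⟩; exact ⟨⟨hp, h2, h3, h4⟩, SimpleGraph.Reachable.refl _⟩
      rw [this, hz, Finset.mem_singleton]
      have := hup.snd_mem
      grind
  obtain ⟨w, hwp, hw⟩ := (reachGraph R p).exists_ne_odd_degree_of_exists_odd_degree p hodd
  have hpos := hw.pos
  obtain ⟨z, hz⟩ := ((reachGraph R p).degree_pos_iff_exists_adj w).1 hpos
  obtain ⟨⟨hwC, hzC, hwz, hnW⟩, hreach⟩ := hz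
  obtain ⟨s, t, hst, hN, h | h | h⟩ := wedge_local hC hI hW hwC
  · exfalso
    rw [hdeg w {s, t}] at hw
    · rw [Finset.card_pair hst] at hw
      exact absurd hw (by decide)
    · intro z
      have hz := hN z
      rw [Finset.mem_insert, Finset.mem_singleton, ← hz]
      constructor
      · rintro ⟨⟨_, h2, h3, h4⟩, _⟩; exact ⟨h3, h2⟩
      · rintro ⟨h3, h2⟩; exact ⟨⟨hwC, h2, h3, fun h' => h.1 h'.fst_mem⟩, hreach⟩
  · rcases (hpq w).1 h.1 with rfl | rfl
    · exact absurd rfl hwp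
    · exact hreach
  · exfalso
    rcases (hN z).1 ⟨hwz, hzC⟩ with rfl | rfl
    · exact hnW h.2.2.1
    · exact hnW h.2.2.2

/-- The cycle edges outside a wedge form a connected graph. -/
theorem coGraph_conn [Finite V] {G : SimpleGraph V} {C I : Set V} (hC : IsInducedCycle G C)
    (hI : I = Cᶜ) (hind : ∀ u ∈ I, ∀ v ∈ I, ¬ G.Adj u v)
    {W : G.Subgraph} {u : V} (hW : IsWedge G C I W u) {a a' b b' : V}
    (ha : (coGraph G C W).Adj a a') (hb : (coGraph G C W).Adj b b') :
    (coGraph G C W).Reachable a b := by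
  obtain ⟨⟨p, q, hpq, hp, hq, hpq'⟩, -⟩ := wedge_anchor hI hind hW
  have hends := coGraph_ends hC hI hW hp hpq'
  suffices H : ∀ a a', (coGraph G C W).Adj a a' → (coGraph G C W).Reachable p a from
    (H a a' ha).symm.trans (H b b' hb)
  clear ha hb a a' b b'
  intro a a' ha
  by_contra hcon
  have hout : ∀ y z, (coGraph G C W).Adj y z → (coGraph G C W).Reachable a y → y ∉ W.verts := by
    intro y z hyz hay hyW
    obtain ⟨s, t, hst, hN, h | h | h⟩ := wedge_local hC hI hW hyz.1
    · exact h.1 hyW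
    · rcases (hpq' y).1 h.1 with rfl | rfl
      · exact hcon hay.symm
      · exact hcon (hends.trans hay.symm)
    · rcases (hN z).1 ⟨hyz.2.2.1, hyz.2.1⟩ with rfl | rfl
      · exact hyz.2.2.2 h.2.2.1
      · exact hyz.2.2.2 h.2.2.2
  have key : ∀ (y z : C), (G.induce C).Walk y z →
      ((coGraph G C W).Reachable a y ∧ (y : V) ∉ W.verts) →
      ((coGraph G C W).Reachable a z ∧ (z : V) ∉ W.verts) := by
    intro y z w
    induction w with
    | nil => exact id
    | @cons y y' z hadj _ ih =>
      intro h
      apply ih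
      have hR : (coGraph G C W).Adj (y : V) (y' : V) :=
        ⟨y.2, y'.2, hadj, fun h' => h.2 h'.fst_mem⟩
      exact ⟨h.1.trans hR.reachable, hout _ _ hR.symm (h.1.trans hR.reachable)⟩
  obtain ⟨w⟩ := hC.1.preconnected ⟨a, ha.1⟩ ⟨p, hp⟩
  exact hcon (key _ _ w ⟨SimpleGraph.Reachable.refl _,
    hout a a' ha (SimpleGraph.Reachable.refl _)⟩).1.symm

/-- A wedge end lies in the barrier. -/
theorem end_mem_barrier [Finite V] {G : SimpleGraph V} {C I : Set V} (hC : IsInducedCycle G C)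
    (hI : I = Cᶜ) (hind : ∀ u ∈ I, ∀ v ∈ I, ¬ G.Adj u v)
    {W : G.Subgraph} {u : V} (hW : IsWedge G C I W u) {y : V} (hy : W.Adj u y) :
    y ∈ barrier G C W u := by
  unfold barrier
  split_ifs with hCW
  · exact hy.adj_sub
  · have hyC : y ∈ C := by
      by_contra h
      exact hind u hW.2.1 y (by rw [hI]; exact h) hy.adj_sub
    obtain ⟨s, t, hst, hN, h⟩ := wedge_local hC hI hW hyC
    have hyW : y ∈ W.verts := hy.snd_mem
    have h' : W.Adj y s ∧ ¬ W.Adj y t := by tauto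
    obtain ⟨hyt, htC⟩ := (hN t).2 (Or.inr rfl)
    refine ⟨fun h => h.1 hyW, ?_⟩
    by_cases htW : t ∈ W.verts
    · exfalso
      obtain ⟨c, hcC, hcW⟩ := Set.not_subset.1 hCW
      have hcn : ∃ c', (coGraph G C W).Adj c c' := by
        obtain ⟨s', t', _, hN', _⟩ := wedge_local hC hI hW hcC
        obtain ⟨h1, h2⟩ := (hN' s').2 (Or.inl rfl)
        exact ⟨s', hcC, h2, h1, fun h => hcW h.fst_mem⟩
      obtain ⟨c', hc'⟩ := hcn
      have hyR : (coGraph G C W).Adj y t := ⟨hyC, htC, hyt, h'.2⟩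
      obtain ⟨w⟩ := coGraph_conn hC hI hind hW hyR hc'
      have inv : ∀ a b, (coGraph G C W).Walk a b → (a = y ∨ a = t) → (b = y ∨ b = t) := by
        intro a b w
        induction w with
        | nil => exact id
        | @cons a a' b hadj _ ih =>
          intro ha
          apply ih
          rcases ha with rfl | rfl
          · have := (hN a').1 ⟨hadj.2.2.1, hadj.2.1⟩
            rcases this with rfl | rfl
            · exact absurd h'.1 hadj.2.2.2
            · exact Or.inr rfl
          · left
            obtain ⟨s', t', hst', hN', hh⟩ := wedge_local hC hI hW htC
            have e1 := (hN' a').1 ⟨hadj.2.2.1, hadj.2.1⟩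
            have e2 := (hN' y).1 ⟨hyt.symm, hyC⟩
            have e3 := hadj.2.2.2
            have e4 : ¬ W.Adj a y := fun h => h'.2 h.symm
            rcases hh with hh | hh | hh
            · exact absurd htW hh.1
            · rcases e1 with rfl | rfl
              · exact absurd hh.2.1 e3
              · rcases e2 with rfl | rfl
                · exact absurd hh.2.1 e4
                · rfl
            · rcases e1 with rfl | rfl
              · exact absurd hh.2.2.1 e3
              · exact absurd hh.2.2.2 e3
      rcases inv y c w (Or.inl rfl) with rfl | rfl
      · exact hcW hyW
      · exact hcW htW
    · exact ⟨t, ⟨htW, t, htC, htW, SimpleGraph.Walk.nil, by simpa using htW⟩, hyt.symm⟩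

/-- A vertex of the wedge adjacent to something outside reaching the cycle is in the barrier. -/
theorem mem_barrier {G : SimpleGraph V} {C : Set V} {W : G.Subgraph} {u x c y : V}
    (hx : x ∉ W.verts) (hc : c ∈ C) (hcW : c ∉ W.verts) (hxc : x = c ∨ G.Adj x c)
    (hy : y ∈ W.verts) (hxy : G.Adj x y) : y ∈ barrier G C W u := by
  unfold barrier
  rw [if_neg (fun h => hcW (h hc))]
  refine ⟨fun h => h.1 hy, x, ⟨hx, c, hc, hcW, ?_⟩, hxy⟩
  rcases hxc with rfl | h
  · exact ⟨SimpleGraph.Walk.nil, by simpa using hx⟩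
  · exact ⟨SimpleGraph.Walk.cons h SimpleGraph.Walk.nil, by simp [hx, hcW]⟩

/-- A cycle edge between wedge vertices outside the barrier lies in the wedge. -/
theorem edge_mem [Finite V] {G : SimpleGraph V} {C I : Set V} (hC : IsInducedCycle G C)
    (hI : I = Cᶜ) (hind : ∀ u ∈ I, ∀ v ∈ I, ¬ G.Adj u v)
    {W : G.Subgraph} {u : V} (hW : IsWedge G C I W u) {a b : V} (ha : a ∈ C) (hb : b ∈ C)
    (haW : a ∈ W.verts) (hab : G.Adj a b) (hS : a ∉ barrier G C W u) : W.Adj a b := by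
  obtain ⟨s, t, hst, hN, h | h | h⟩ := wedge_local hC hI hW ha
  · exact absurd haW h.1
  · exact absurd (end_mem_barrier hC hI hind hW h.1) hS
  · rcases (hN b).1 ⟨hab, hb⟩ with rfl | rfl
    · exact h.2.2.1
    · exact h.2.2.2

/-- If `x` attaches to `σ u` without improving it, the two wedges cover the cycle. -/
theorem cover_edges [Finite V] {G : SimpleGraph V} {C I : Set V} (hC : IsInducedCycle G C)
    (hI : I = Cᶜ) (hind : ∀ u ∈ I, ∀ v ∈ I, ¬ G.Adj u v)
    {W X : G.Subgraph} {u x : V} (hW : IsWedge G C I W u) (hX : IsWedge G C I X x)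
    (hN : ∀ z, G.Adj x z → z ∈ W.verts) (hnot : ¬ G.neighborSet x ⊆ G.neighborSet u)
    (himp : ¬ Improves G X x W u) {a b : V} (hab : (coGraph G C X).Adj a b) : W.Adj a b := by
  by_contra hWab
  have huC : u ∉ C := by have := hW.2.1; rw [hI] at this; exact this
  have hxC : x ∉ C := by have := hX.2.1; rw [hI] at this; exact this
  have mix : ∀ y z z', (coGraph G C W).Adj y z → (coGraph G C W).Adj y z' →
      ¬ X.Adj y z → ¬ X.Adj y z' := by
    intro y z z' h1 h2 h3 h4
    have hzz : z ≠ z' := by rintro rfl; exact h3 h4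
    have hyX : X.Adj x y := by
      obtain ⟨s, t, hst, hNy, h | h | h⟩ := wedge_local hC hI hX h1.1
      · exact absurd h4.fst_mem h.1
      · exact h.1
      · rcases (hNy z).1 ⟨h1.2.2.1, h1.2.1⟩ with rfl | rfl
        · exact absurd h.2.2.1 h3
        · exact absurd h.2.2.2 h3
    have hyW := hN y hyX.adj_sub
    obtain ⟨s, t, hst, hNy, h⟩ := wedge_local hC hI hW h1.1
    have e1 := (hNy z).1 ⟨h1.2.2.1, h1.2.1⟩
    have e2 := (hNy z').1 ⟨h2.2.2.1, h2.2.1⟩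
    have e3 := h1.2.2.2
    have e4 := h2.2.2.2
    grind
  have hab' : (coGraph G C W).Adj a b := ⟨hab.1, hab.2.1, hab.2.2.1, hWab⟩
  have hedge : ∀ c d, c ∈ C → d ∈ C → X.Adj c d → W.Adj c d := by
    intro c d hc hd hcd
    by_contra hWcd
    have hR : (coGraph G C W).Adj c d := ⟨hc, hd, hcd.adj_sub, hWcd⟩
    obtain ⟨w⟩ := coGraph_conn hC hI hind hW hab' hR
    have inv : ∀ y z, (coGraph G C W).Walk y z →
        (∀ z', (coGraph G C W).Adj y z' → ¬ X.Adj y z') →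
        (∀ z', (coGraph G C W).Adj z z' → ¬ X.Adj z z') := by
      intro y z w
      induction w with
      | nil => exact id
      | @cons y y' z hadj _ ih =>
        intro h
        apply ih
        intro z' hz'
        exact mix y' y z' hadj.symm hz' (fun h' => h y' hadj h'.symm)
    exact inv a c w (fun z' hz' => mix a b z' hab' hz' hab.2.2.2) d hR hcd
  have hXC : ∀ y ∈ X.verts, y ≠ x → y ∈ C := by
    intro y hy hne
    by_contra h
    have : y ∈ X.verts ∩ I := ⟨hy, by rw [hI]; exact h⟩
    rw [hX.2.2.1] at this
    exact hne this
  have hWC : ∀ y ∈ W.verts, y ≠ u → y ∈ C := by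
    intro y hy hne
    by_contra h
    have : y ∈ W.verts ∩ I := ⟨hy, by rw [hI]; exact h⟩
    rw [hW.2.2.1] at this
    exact hne this
  have hle : X.deleteVerts {x} ≤ W.deleteVerts {u} := by
    constructor
    · intro y hy
      rw [SimpleGraph.Subgraph.deleteVerts_verts] at hy ⊢
      have hyC := hXC y hy.1 hy.2
      refine ⟨?_, fun h => huC (h ▸ hyC)⟩
      obtain ⟨s, t, hst, hNy, h⟩ := wedge_local hC hI hX hyC
      have hys : X.Adj y s := by have := hy.1; tauto
      exact (hedge y s hyC ((hNy s).2 (Or.inl rfl)).2 hys).fst_mem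
    · intro y z hyz
      rw [SimpleGraph.Subgraph.deleteVerts_adj] at hyz ⊢
      obtain ⟨h1, h2, h3, h4, h5⟩ := hyz
      have hyC := hXC y h1 h2
      have hzC := hXC z h3 h4
      have := hedge y z hyC hzC h5
      exact ⟨this.fst_mem, fun h => huC (h ▸ hyC), this.snd_mem, fun h => huC (h ▸ hzC), this⟩
  have heq : X.deleteVerts {x} = W.deleteVerts {u} := by
    by_contra h
    exact himp ⟨hle, h⟩
  apply hnot
  intro y hy
  have hyC : y ∈ C := by
    by_contra h
    exact hind x hX.2.1 y (by rw [hI]; exact h) hy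
  have hyW := hN y hy
  have hyX : y ∈ X.verts := by
    have : y ∈ (W.deleteVerts {u}).verts := by
      rw [SimpleGraph.Subgraph.deleteVerts_verts]
      exact ⟨hyW, fun h => huC (h ▸ hyC)⟩
    rw [← heq, SimpleGraph.Subgraph.deleteVerts_verts] at this
    exact this.1
  have hxy := (wedge_anchor hI hind hX).2 y hyX hy
  obtain ⟨s, t, hst, hNy, h⟩ := wedge_local hC hI hX hyC
  obtain ⟨hyt, htC⟩ := (hNy t).2 (Or.inr rfl)
  have hnt : ¬ X.Adj y t := by tauto
  have hnt' : ¬ W.Adj y t := by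
    intro h'
    have : (W.deleteVerts {u}).Adj y t := by
      rw [SimpleGraph.Subgraph.deleteVerts_adj]
      exact ⟨h'.fst_mem, fun h => huC (h ▸ hyC), h'.snd_mem, fun h => huC (h ▸ htC), h'⟩
    rw [← heq, SimpleGraph.Subgraph.deleteVerts_adj] at this
    exact hnt this.2.2.2.2
  obtain ⟨s', t', hst', hNy', h' | h' | h'⟩ := wedge_local hC hI hW hyC
  · exact absurd hyW h'.1
  · exact h'.1.adj_sub
  · rcases (hNy' t).1 ⟨hyt, htC⟩ with rfl | rfl
    · exact absurd h'.2.2.1 hnt'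
    · exact absurd h'.2.2.2 hnt'

/-- for a good pair `{u, v}`, each component `P` of
`σ u ⊓ σ v ⊓ C` is separated from `C - V(P)` by the union of the barriers. -/
theorem good_pair_separation [Finite V] (G : SimpleGraph V) (C I : Set V)
    (hcob : IsCobweb G C I) (σ : V → G.Subgraph)
    (hσ : ∀ v ∈ I, IsWedge G C I (σ v) v)
    (u v : V) (hu : GoodVertex G I σ u) (hv : GoodVertex G I σ v)
    (P : ((σ u ⊓ σ v) ⊓ (⊤ : G.Subgraph).induce C).coe.ConnectedComponent) :
    Separates G (barrier G C (σ u) u ∪ barrier G C (σ v) v)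
      (Subtype.val '' P.supp) (C \ (Subtype.val '' P.supp)) := by
  obtain ⟨hC, hI, -, hind, -, hN⟩ := hcob
  have hWu := hσ u hu.1
  have hWv := hσ v hv.1
  have hPmem : ∀ y ∈ Subtype.val '' P.supp, y ∈ (σ u).verts ∧ y ∈ (σ v).verts ∧ y ∈ C := by
    rintro _ ⟨⟨y, hy⟩, -, rfl⟩
    exact ⟨hy.1.1, hy.1.2, hy.2⟩
  have hPstep : ∀ y ∈ Subtype.val '' P.supp, ∀ z ∈ C, (σ u).Adj y z → (σ v).Adj y z →
      z ∈ Subtype.val '' P.supp := by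
    rintro _ ⟨⟨y, hy⟩, hyP, rfl⟩ z hz h1 h2
    refine ⟨⟨z, ⟨⟨h1.snd_mem, h2.snd_mem⟩, hz⟩⟩, ?_, rfl⟩
    rw [SimpleGraph.ConnectedComponent.mem_supp_iff] at hyP ⊢
    rw [← hyP]
    apply SimpleGraph.ConnectedComponent.sound
    apply SimpleGraph.Adj.reachable
    exact ⟨⟨h1.symm, h2.symm⟩, hz, hy.2, h1.symm.adj_sub⟩
  set A := Subtype.val '' P.supp with hA
  have inv : ∀ a b (p : G.Walk a b),
      (∀ x ∈ p.support, x ∉ barrier G C (σ u) u ∪ barrier G C (σ v) v) →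
      (a ∈ A ∨ (a ∉ C ∧ ∀ z, G.Adj a z → z ∈ A)) → (b ∈ A ∨ (b ∉ C ∧ ∀ z, G.Adj b z → z ∈ A)) := by
    intro a b p
    induction p with
    | nil => exact fun _ h => h
    | @cons a y b hadj p ih =>
      intro hS ha
      refine ih (fun x hx => hS x (by simp [hx])) ?_
      rcases ha with ha | ha
      swap
      · exact Or.inl (ha.2 y hadj)
      have haS : a ∉ barrier G C (σ u) u ∪ barrier G C (σ v) v := hS a (by simp)
      have haSu : a ∉ barrier G C (σ u) u := fun h => haS (Or.inl h)
      have haSv : a ∉ barrier G C (σ v) v := fun h => haS (Or.inr h)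
      obtain ⟨hau, hav, haC⟩ := hPmem a ha
      by_cases hy : y ∈ C
      · left
        exact hPstep a ha y hy (edge_mem hC hI hind hWu haC hy hau hadj haSu)
          (edge_mem hC hI hind hWv haC hy hav hadj haSv)
      · right
        refine ⟨hy, ?_⟩
        have hyI : y ∈ I := by rw [hI]; exact hy
        have aux : ∀ w, GoodVertex G I σ w → a ∈ (σ w).verts → a ∉ barrier G C (σ w) w →
            ∀ c d, (coGraph G C (σ y)).Adj c d → (σ w).Adj c d := by
          intro w hw haw haS c d hcd
          have hWw := hσ w hw.1
          have hyw : y ≠ w := by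
            rintro rfl
            exact haS (end_mem_barrier hC hI hind hWw
              ((wedge_anchor hI hind hWw).2 a haw hadj.symm))
          have hyW : y ∉ (σ w).verts := by
            intro h
            have : y ∈ (σ w).verts ∩ I := ⟨h, hyI⟩
            rw [hWw.2.2.1] at this
            exact hyw this
          refine cover_edges hC hI hind hWw (hσ y hyI) ?_ (hN y hyI w hw.1 hyw) (hw.2 y hyI) hcd
          intro z hz
          by_contra hzW
          have hzC : z ∈ C := by
            by_contra h
            exact hind y hyI z (by rw [hI]; exact h) hz
          exact haS (mem_barrier hyW hzC hzW (Or.inr hz) haw hadj.symm)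
        have auxu := aux u hu hau haSu
        have auxv := aux v hv hav haSv
        have hWy := hσ y hyI
        have hiso : ∀ z, G.Adj y z → ∃ z', (coGraph G C (σ y)).Adj z z' := by
          intro z hz
          have hzC : z ∈ C := by
            by_contra h
            exact hind y hyI z (by rw [hI]; exact h) hz
          obtain ⟨s, t, hst, hNz, h⟩ := wedge_local hC hI hWy hzC
          obtain ⟨h1, h2⟩ := (hNz t).2 (Or.inr rfl)
          refine ⟨t, hzC, h2, h1, ?_⟩
          have := fun h => (wedge_anchor hI hind hWy).2 z h hz
          tauto
        intro z hz
        obtain ⟨a', ha'⟩ := hiso a hadj.symm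
        obtain ⟨z', hz'⟩ := hiso z hz
        obtain ⟨w⟩ := coGraph_conn hC hI hind hWy ha' hz'
        have inv2 : ∀ c d, (coGraph G C (σ y)).Walk c d → c ∈ A → d ∈ A := by
          intro c d w
          induction w with
          | nil => exact id
          | @cons c c' d hcc _ ih2 =>
            intro hc
            exact ih2 (hPstep c hc c' hcc.2.1 (auxu _ _ hcc) (auxv _ _ hcc))
        exact inv2 a z w ha
  intro a ha b hb p
  by_contra hcon
  push Not at hcon
  rcases inv a b p hcon (Or.inl ha) with h | h
  · exact hb.2 h
  · exact h.1 hb.1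
end
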